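/- Let m′, n′, m, n ≥ 0 be integers with m′ + n′ > 0, m′ ≤ m, and n′ ≤ n. Then B(m′,n′) ⊆ B(m,n) if and only if m ≡ m′ (mod m′+n′) and n ≡ n′ (mod m′+n′). In particular, whenever B(m′,n′) ⊆ B(m,n), the integer m′+n′ divides m+n. -/

import Mathlib

open Function Set

/-- The monic centered cubic polynomial `F_{a,v}(z) = z³ − 3a²z + (2a³ + v)`. -/
noncomputable def Fav (a v : ℂ) : ℂ → ℂ := fun z => z ^ 3 - 3 * a ^ 2 * z + (2 * a ^ 3 + v)

/-- The set `B(m,n)` of maps with `F^{∘m}(a) = −a` and `F^{∘n}(−a) = a`. -/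
noncomputable def Bset (m n : ℕ) : Set (ℂ × ℂ) :=
  {w | (Fav w.1 w.2)^[m] w.1 = -w.1 ∧ (Fav w.1 w.2)^[n] (-w.1) = w.1}

/-!
Over a ring of characteristic `3` the cubic is `z ↦ z ^ 3 - a ^ 3 + v`, which is conjugate by a
translation to the Frobenius map as soon as it has a fixed point. Hence a primitive element `x` of
the field with `3 ^ (m' + n')` elements yields a point of the analogue of `Bset m' n'` over that
field: the translation carries `a` and `-a` to `x` and `x ^ 3 ^ m'`, and since `x` has exactly
`m' + n'` conjugates, the point lies in the analogue of `Bset m n` if and only if `m ≡ m'` and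
`n ≡ n'` modulo `m' + n'`.

An inclusion in characteristic `0` descends to this field. Modulo `3` the equations of `Bset m' n'`
have a constant Jacobian of determinant `2`, so by Hensel's lemma the point lifts to the Witt
vectors, a domain of characteristic `0`. There the inclusion holds by the Nullstellensatz over `ℚ`,
and it is preserved by reduction modulo `3`.
-/

/-- The cubic `z³ − 3a²z + (2a³ + v)` over a commutative ring; over `ℂ` it is `Fav a v`. -/
def cubic {A : Type*} [CommRing A] (a v : A) : A → A :=
  fun z => z ^ 3 - 3 * a ^ 2 * z + (2 * a ^ 3 + v)

/-- The analogue of `Bset m n` over a commutative ring: the parameters of the cubics whose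
marked points `a` and `-a` are exchanged by the `m`-th and `n`-th iterates. -/
def swapSet (A : Type*) [CommRing A] (m n : ℕ) : Set (A × A) :=
  {w | (cubic w.1 w.2)^[m] w.1 = -w.1 ∧ (cubic w.1 w.2)^[n] (-w.1) = w.1}

/-- The pair of equations defining `swapSet A m n`, as a map in the parameters `x = ![a, v]`. -/
def swapMap {A : Type*} [CommRing A] (m n : ℕ) (x : Fin 2 → A) : Fin 2 → A :=
  ![(cubic (x 0) (x 1))^[m] (x 0) + x 0, (cubic (x 0) (x 1))^[n] (-x 0) - x 0]

section CommRing

variable {A B : Type*} [CommRing A] [CommRing B]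

lemma map_cubic_iterate (f : A →+* B) (a v z : A) (k : ℕ) :
    f ((cubic a v)^[k] z) = (cubic (f a) (f v))^[k] (f z) := by
  have h : Semiconj f (cubic a v) (cubic (f a) (f v)) := fun z => by
    simp only [cubic, map_add, map_sub, map_mul, map_pow, map_ofNat]
  exact h.iterate_right k z

lemma map_swapMap (f : A →+* B) {m n : ℕ} (x : Fin 2 → A) (i : Fin 2) :
    f (swapMap m n x i) = swapMap m n (f ∘ x) i := by
  fin_cases i <;> simp [swapMap, map_cubic_iterate]

lemma mem_swapSet_iff_swapMap_eq_zero {m n : ℕ} {x : Fin 2 → A} :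
    (x 0, x 1) ∈ swapSet A m n ↔ swapMap m n x = 0 := by
  rw [funext_iff, Fin.forall_fin_two]
  exact and_congr eq_neg_iff_add_eq_zero sub_eq_zero.symm

lemma map_mem_swapSet (f : A →+* B) {m n : ℕ} {w : A × A} (hw : w ∈ swapSet A m n) :
    (f w.1, f w.2) ∈ swapSet B m n := by
  constructor
  · rw [← map_cubic_iterate, hw.1, map_neg]
  · rw [← map_neg, ← map_cubic_iterate, hw.2]

lemma map_mem_swapSet_iff {f : A →+* B} (hf : Injective f) {m n : ℕ} {w : A × A} :
    (f w.1, f w.2) ∈ swapSet B m n ↔ w ∈ swapSet A m n := by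
  simp only [swapSet, mem_ofPred_eq, ← map_neg, ← map_cubic_iterate, hf.eq_iff]

lemma swapSet_subset_of_modEq {m' n' m n : ℕ} (hm : m ≡ m' [MOD m' + n'])
    (hn : n ≡ n' [MOD m' + n']) : swapSet A m' n' ⊆ swapSet A m n := by
  rintro ⟨a, v⟩ ⟨hP, hQ⟩
  have ha : IsPeriodicPt (cubic a v) (m' + n') a := by
    rw [IsPeriodicPt, IsFixedPt, add_comm, iterate_add_apply, hP, hQ]
  have hna : IsPeriodicPt (cubic a v) (m' + n') (-a) := by
    rw [IsPeriodicPt, IsFixedPt, iterate_add_apply, hQ, hP]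
  constructor
  · rw [← ha.iterate_mod_apply, hm, ha.iterate_mod_apply, hP]
  · rw [← hna.iterate_mod_apply, hn, hna.iterate_mod_apply, hQ]

end CommRing

section Nullstellensatz

open MvPolynomial

theorem aeval_eq_zero_of_forall_zero_of_isAlgClosed {k K L σ : Type*} [Field k] [Field K]
    [Algebra k K] [IsAlgClosed K] [CommRing L] [IsReduced L] [Algebra k L] [Finite σ]
    {s : Set (MvPolynomial σ k)} {p : MvPolynomial σ k}
    (h : ∀ x : σ → K, (∀ q ∈ s, aeval x q = 0) → aeval x p = 0)
    {y : σ → L} (hy : ∀ q ∈ s, aeval y q = 0) : aeval y p = 0 := by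
  have hp : p ∈ (Ideal.span s).radical := by
    rw [← vanishingIdeal_zeroLocus_eq_radical (K := K), mem_vanishingIdeal_iff]
    exact fun x hx => h x fun q hq => hx q (Ideal.subset_span hq)
  obtain ⟨N, hN⟩ := hp
  have hker : Ideal.span s ≤ RingHom.ker (aeval y : MvPolynomial σ k →ₐ[k] L) :=
    Ideal.span_le.2 hy
  have hpow : aeval y p ^ N = 0 := by rw [← map_pow]; exact hker hN
  exact eq_zero_of_pow_eq_zero hpow

lemma aeval_swapMap_X {k A : Type*} [CommRing k] [CommRing A] [Algebra k A] {m n : ℕ}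
    (x : Fin 2 → A) (i : Fin 2) :
    aeval x (swapMap m n (X : Fin 2 → MvPolynomial (Fin 2) k) i) = swapMap m n x i := by
  have h := map_swapMap (m := m) (n := n) (aeval x : MvPolynomial (Fin 2) k →ₐ[k] A).toRingHom X i
  rwa [show ⇑(aeval x : MvPolynomial (Fin 2) k →ₐ[k] A).toRingHom ∘ X = x from funext (aeval_X x)]
    at h

lemma mem_swapSet_iff_aeval (k : Type*) {A : Type*} [CommRing k] [CommRing A] [Algebra k A]
    {m n : ℕ} {x : Fin 2 → A} :
    (x 0, x 1) ∈ swapSet A m n ↔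
      ∀ q ∈ range (swapMap m n (X : Fin 2 → MvPolynomial (Fin 2) k)), aeval x q = 0 := by
  rw [mem_swapSet_iff_swapMap_eq_zero, forall_mem_range, funext_iff]
  simp only [aeval_swapMap_X, Pi.zero_apply]

theorem swapSet_subset_of_isAlgClosed {K R : Type*} [Field K] [IsAlgClosed K] [CharZero K]
    [CommRing R] [IsDomain R] [CharZero R] {m' n' m n : ℕ}
    (h : swapSet K m' n' ⊆ swapSet K m n) : swapSet R m' n' ⊆ swapSet R m n := by
  intro w hw
  have hinj := IsFractionRing.injective R (FractionRing R)
  have : CharZero (FractionRing R) := charZero_of_injective_algebraMap hinj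
  rw [← map_mem_swapSet_iff hinj] at hw ⊢
  refine (mem_swapSet_iff_aeval ℚ (x := ![_, _])).2 fun q hq => ?_
  refine aeval_eq_zero_of_forall_zero_of_isAlgClosed (K := K) (fun x hx => ?_)
    ((mem_swapSet_iff_aeval ℚ (x := ![_, _])).1 hw)
  exact (mem_swapSet_iff_aeval ℚ).1 (h ((mem_swapSet_iff_aeval ℚ).2 hx)) q hq

end Nullstellensatz

section Hensel

variable {R : Type*} [CommRing R] {I : Ideal R}

/-- A self-map of a power of `R` that improves congruences modulo each `I ^ (k + 1)` to
congruences modulo `I ^ (k + 2)`; no condition is imposed on points incongruent modulo `I`. -/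
def IsAdicContraction {ι : Type*} (I : Ideal R) (T : (ι → R) → ι → R) : Prop :=
  ∀ ⦃k : ℕ⦄ ⦃x y : ι → R⦄, (∀ i, x i ≡ y i [SMOD I ^ (k + 1)]) →
    ∀ i, T x i ≡ T y i [SMOD I ^ (k + 2)]

theorem IsAdicContraction.exists_isFixedPt {ι : Type*} [IsAdicComplete I R]
    {T : (ι → R) → ι → R} (hT : IsAdicContraction I T) {x₀ : ι → R}
    (h₀ : ∀ i, x₀ i ≡ T x₀ i [SMOD I]) : ∃ x, IsFixedPt T x ∧ ∀ i, x i ≡ x₀ i [SMOD I] := by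
  have hsucc (k : ℕ) : ∀ i, T^[k] x₀ i ≡ T^[k + 1] x₀ i [SMOD I ^ (k + 1)] := by
    induction k with
    | zero => rwa [zero_add, pow_one]
    | succ k ih =>
      simp only [iterate_succ_apply'] at ih ⊢
      exact hT ih
  have hcauchy (i : ι) : AdicCompletion.IsAdicCauchy I R fun k => T^[k] x₀ i := by
    rw [AdicCompletion.isAdicCauchy_iff]
    intro k
    rw [smul_eq_mul, Ideal.mul_top]
    exact (hsucc k i).mono (Ideal.pow_le_pow_right k.le_succ)
  choose x hx using fun i => IsPrecomplete.prec inferInstance (hcauchy i)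
  simp only [smul_eq_mul, Ideal.mul_top] at hx
  refine ⟨x, funext fun i => (IsHausdorff.eq_iff_smodEq (I := I)).2 fun k => ?_, fun i => ?_⟩
  · rw [smul_eq_mul, Ideal.mul_top]
    have hTx : T x i ≡ x i [SMOD I ^ (k + 2)] := calc
      T x i ≡ T (T^[k + 1] x₀) i [SMOD I ^ (k + 2)] := hT (fun j => (hx j (k + 1)).symm) i
      _ = T^[k + 2] x₀ i := congrFun (iterate_succ_apply' T (k + 1) x₀).symm i
      _ ≡ x i [SMOD I ^ (k + 2)] := hx i (k + 2)
    exact hTx.mono (Ideal.pow_le_pow_right (by lia))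
  · have hx₁ : T x₀ i ≡ x i [SMOD I] := by simpa only [iterate_one, pow_one] using hx i 1
    exact ((h₀ i).trans hx₁).symm

open Matrix in
theorem exists_eq_zero_of_sub_smodEq_mulVec {ι : Type*} [Fintype ι] [DecidableEq ι]
    [IsAdicComplete I R] {f : (ι → R) → ι → R} {J : Matrix ι ι R} (hJ : IsUnit J.det)
    (hf : ∀ (k : ℕ) (x y : ι → R), (∀ i, x i ≡ y i [SMOD I ^ (k + 1)]) →
      ∀ i, f x i - f y i ≡ (J *ᵥ (x - y)) i [SMOD I ^ (k + 2)])
    {x₀ : ι → R} (h₀ : ∀ i, f x₀ i ≡ 0 [SMOD I]) :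
    ∃ x, f x = 0 ∧ ∀ i, x i ≡ x₀ i [SMOD I] := by
  have hcongr {K : Ideal R} {u w : ι → R} (h : ∀ i, u i ≡ w i [SMOD K]) (i : ι) :
      (J⁻¹ *ᵥ u) i ≡ (J⁻¹ *ᵥ w) i [SMOD K] :=
    SModEq.sum fun j _ => SModEq.rfl.mul (h j)
  have hT : IsAdicContraction I fun x => x - J⁻¹ *ᵥ f x := fun k x y hxy i => by
    have h := hcongr (u := f x - f y) (hf k x y hxy) i
    rw [mulVec_mulVec, nonsing_inv_mul J hJ, one_mulVec, mulVec_sub] at h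
    rw [SModEq.sub_mem] at h ⊢
    convert neg_mem h using 1
    simp only [Pi.sub_apply]
    ring
  obtain ⟨x, hx, hx₀⟩ := hT.exists_isFixedPt (x₀ := x₀) fun i => by
    have h := hcongr (w := 0) h₀ i
    rw [mulVec_zero] at h
    simpa only [Pi.sub_apply, Pi.zero_apply, sub_zero] using (SModEq.refl (x₀ i)).sub h.symm
  refine ⟨x, ?_, hx₀⟩
  have hzero : J⁻¹ *ᵥ f x = 0 := sub_eq_self.1 hx
  rw [← one_mulVec (f x), ← mul_nonsing_inv J hJ, ← mulVec_mulVec, hzero, mulVec_zero]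

/- The derivatives of `F` in `z` and in `a` are divisible by `3`, so only `v` matters. -/
lemma cubic_sub_cubic_smodEq (h3 : (3 : R) ∈ I) {k : ℕ} {a a' v v' z z' : R}
    (ha : a ≡ a' [SMOD I ^ (k + 1)]) (hz : z ≡ z' [SMOD I ^ (k + 1)]) :
    cubic a v z - cubic a' v' z' ≡ v - v' [SMOD I ^ (k + 2)] := by
  rw [SModEq.sub_mem] at *
  have hcube {t : R} (ht : t ∈ I ^ (k + 1)) : t ^ 3 ∈ I ^ (k + 2) := by
    have := Ideal.pow_mem_pow ht 3
    rw [← pow_mul] at this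
    exact Ideal.pow_le_pow_right (by lia) this
  have hthree {t : R} (ht : t ∈ I ^ (k + 1)) : t * 3 ∈ I ^ (k + 2) := by
    rw [pow_succ]
    exact Ideal.mul_mem_mul ht h3
  have hmem : (z - z') ^ 3 + 2 * (a - a') ^ 3 +
      ((z * z' - a' ^ 2) * (z - z') + (2 * a * a' - (a + a') * z) * (a - a')) * 3
      ∈ I ^ (k + 2) :=
    add_mem (add_mem (hcube hz) (Ideal.mul_mem_left _ _ (hcube ha)))
      (hthree (add_mem (Ideal.mul_mem_left _ _ hz) (Ideal.mul_mem_left _ _ ha)))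
  convert hmem using 1
  simp only [cubic]
  ring

lemma cubic_iterate_sub_smodEq (h3 : (3 : R) ∈ I) {k : ℕ} {a a' v v' z z' : R}
    (ha : a ≡ a' [SMOD I ^ (k + 1)]) (hv : v ≡ v' [SMOD I ^ (k + 1)])
    (hz : z ≡ z' [SMOD I ^ (k + 1)]) (m : ℕ) :
    (cubic a v)^[m] z - (cubic a' v')^[m] z' ≡ if m = 0 then z - z' else v - v'
      [SMOD I ^ (k + 2)] := by
  have hiter (j : ℕ) : (cubic a v)^[j] z ≡ (cubic a' v')^[j] z' [SMOD I ^ (k + 1)] := by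
    induction j with
    | zero => exact hz
    | succ j ih =>
      simp only [iterate_succ_apply']
      have h := (cubic_sub_cubic_smodEq (v := v) (v' := v') h3 ha ih).mono
        (Ideal.pow_le_pow_right (k + 1).le_succ)
      exact sub_smodEq_zero.1 (h.trans (sub_smodEq_zero.2 hv))
  cases m with
  | zero => rfl
  | succ m =>
    simp only [iterate_succ_apply', if_neg m.succ_ne_zero]
    exact cubic_sub_cubic_smodEq h3 ha (hiter m)

lemma isUnit_two_of_three_mem [IsAdicComplete I R] (h3 : (3 : R) ∈ I) : IsUnit (2 : R) := by
  have h := Ideal.mem_jacobson_bot.1 (IsAdicComplete.le_jacobson_bot I h3) (-1)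
  rw [← IsUnit.neg_iff] at h
  convert h using 1
  norm_num

/-- The Jacobian matrix of `swapMap m n` modulo any ideal containing `3`, where it is constant. -/
def swapJacobian (R : Type*) [CommRing R] (m n : ℕ) : Matrix (Fin 2) (Fin 2) R :=
  !![if m = 0 then 2 else 1, if m = 0 then 0 else 1;
    if n = 0 then -2 else -1, if n = 0 then 0 else 1]

lemma det_swapJacobian {m n : ℕ} (hmn : 1 ≤ m + n) : (swapJacobian R m n).det = 2 := by
  rw [swapJacobian, Matrix.det_fin_two_of]
  split_ifs
  · lia
  all_goals norm_num

open Matrix in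
lemma swapMap_sub_smodEq (h3 : (3 : R) ∈ I) {m n k : ℕ} {x y : Fin 2 → R}
    (hxy : ∀ i, x i ≡ y i [SMOD I ^ (k + 1)]) (i : Fin 2) :
    swapMap m n x i - swapMap m n y i ≡ (swapJacobian R m n *ᵥ (x - y)) i
      [SMOD I ^ (k + 2)] := by
  have hsub := SModEq.refl (U := I ^ (k + 2)) (x 0 - y 0)
  have hrow (c d : R) : ![c, d] ⬝ᵥ (x - y) = c * (x 0 - y 0) + d * (x 1 - y 1) := by
    rw [dotProduct, Fin.sum_univ_two]
    rfl
  fin_cases i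
  · convert (cubic_iterate_sub_smodEq h3 (hxy 0) (hxy 1) (hxy 0) m).add hsub using 1
    · exact add_sub_add_comm ..
    · refine (hrow ..).trans ?_
      split_ifs <;> ring
  · convert (cubic_iterate_sub_smodEq h3 (hxy 0) (hxy 1) (hxy 0).neg n).sub hsub using 1
    · exact sub_sub_sub_comm ..
    · refine (hrow ..).trans ?_
      split_ifs <;> ring

theorem exists_mem_swapSet_of_smodEq [IsAdicComplete I R] (h3 : (3 : R) ∈ I) {m n : ℕ}
    (hmn : 1 ≤ m + n) {a₀ v₀ : R} (hm : (cubic a₀ v₀)^[m] a₀ ≡ -a₀ [SMOD I])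
    (hn : (cubic a₀ v₀)^[n] (-a₀) ≡ a₀ [SMOD I]) :
    ∃ w ∈ swapSet R m n, w.1 ≡ a₀ [SMOD I] ∧ w.2 ≡ v₀ [SMOD I] := by
  have hJ : IsUnit (swapJacobian R m n).det := by
    rw [det_swapJacobian hmn]
    exact isUnit_two_of_three_mem h3
  have h₀ (i : Fin 2) : swapMap m n ![a₀, v₀] i ≡ 0 [SMOD I] := by
    fin_cases i
    · exact SModEq.zero.2 (by simpa [swapMap] using SModEq.sub_mem.1 hm)
    · exact SModEq.zero.2 (SModEq.sub_mem.1 hn)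
  obtain ⟨x, hx, hx₀⟩ :=
    exists_eq_zero_of_sub_smodEq_mulVec hJ (fun _ _ _ => swapMap_sub_smodEq (m := m) (n := n) h3) h₀
  exact ⟨(x 0, x 1), mem_swapSet_iff_swapMap_eq_zero.2 hx, hx₀ 0, hx₀ 1⟩

end Hensel

section WittVector

theorem charZero_wittVector (p : ℕ) [Fact p.Prime] (k : Type*) [CommRing k] [IsDomain k]
    [CharP k p] : CharZero (WittVector p k) := by
  obtain ⟨q, hq⟩ := CharP.exists (WittVector p k)
  have hpq : p ∣ q := by
    rw [← CharP.cast_eq_zero_iff k, ← map_natCast (WittVector.constantCoeff (p := p) (R := k)),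
      CharP.cast_eq_zero, map_zero]
  rcases CharP.char_is_prime_or_zero (WittVector p k) q with hprime | rfl
  · obtain rfl := (Nat.prime_dvd_prime_iff_eq Fact.out hprime).1 hpq
    exact absurd (CharP.cast_eq_zero _ p) (WittVector.p_nonzero p k)
  · exact CharP.charP_to_charZero _

lemma smodEq_span_iff_constantCoeff_eq {p : ℕ} [Fact p.Prime] {k : Type*} [CommRing k]
    [CharP k p] [PerfectRing k p] {x y : WittVector p k} :
    x ≡ y [SMOD Ideal.span {(p : WittVector p k)}] ↔
      WittVector.constantCoeff x = WittVector.constantCoeff y := by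
  rw [SModEq.sub_mem, ← WittVector.ker_constantCoeff, RingHom.mem_ker, map_sub, sub_eq_zero]

theorem swapSet_subset_of_charP_three {K k : Type*} [Field K] [IsAlgClosed K] [CharZero K]
    [Field k] [CharP k 3] [PerfectRing k 3] {m' n' m n : ℕ} (h0 : 1 ≤ m' + n')
    (h : swapSet K m' n' ⊆ swapSet K m n) : swapSet k m' n' ⊆ swapSet k m n := by
  rintro ⟨a, v⟩ ⟨hm, hn⟩
  obtain ⟨a₀, rfl⟩ := WittVector.constantCoeff_surjective 3 a
  obtain ⟨v₀, rfl⟩ := WittVector.constantCoeff_surjective 3 v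
  simp only [← map_neg, ← map_cubic_iterate] at hm hn
  have h3 : (3 : WittVector 3 k) ∈ Ideal.span {((3 : ℕ) : WittVector 3 k)} :=
    Ideal.mem_span_singleton_self _
  obtain ⟨w, hw, ha, hv⟩ := exists_mem_swapSet_of_smodEq h3 h0
    (smodEq_span_iff_constantCoeff_eq.2 hm) (smodEq_span_iff_constantCoeff_eq.2 hn)
  have : CharZero (WittVector 3 k) := charZero_wittVector 3 k
  rw [← smodEq_span_iff_constantCoeff_eq.1 ha, ← smodEq_span_iff_constantCoeff_eq.1 hv]
  exact map_mem_swapSet _ (swapSet_subset_of_isAlgClosed h hw)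

end WittVector

section CharThree

open Module in
theorem exists_pow_card_pow_eq_iff_modEq_finrank (K L : Type*) [Field K] [Fintype K] [Field L]
    [Finite L] [Algebra K L] :
    ∃ x : L, ∀ i j : ℕ, x ^ Fintype.card K ^ i = x ^ Fintype.card K ^ j ↔
      i ≡ j [MOD finrank K L] := by
  obtain ⟨x, hx⟩ := Field.exists_primitive_element K L
  rw [IntermediateField.adjoin_simple_eq_top_iff_of_isAlgebraic (.of_finite K x)] at hx
  let φ := FiniteField.frobeniusAlgEquivOfAlgebraic K L
  have hφ (i : ℕ) : (φ ^ i) x = x ^ Fintype.card K ^ i := by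
    rw [AlgEquiv.coe_pow, FiniteField.coe_frobeniusAlgEquivOfAlgebraic_iterate]
  refine ⟨x, fun i j => ?_⟩
  rw [← FiniteField.orderOf_frobeniusAlgEquivOfAlgebraic K L, ← pow_eq_pow_iff_modEq, ← hφ, ← hφ]
  refine ⟨fun h => AlgEquiv.coe_toAlgHom_injective ?_, fun h => by rw [h]⟩
  exact AlgHom.ext_of_adjoin_eq_top hx (by simpa using h)

lemma cubic_iterate_of_charP_three {A : Type*} [CommRing A] [CharP A 3] (a b z : A) (k : ℕ) :
    (cubic a (b ^ 3 - b + a ^ 3))^[k] z = (z + b) ^ 3 ^ k - b := by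
  have h3 : (3 : A) = 0 := mod_cast CharP.cast_eq_zero A 3
  induction k generalizing z with
  | zero => rw [iterate_zero_apply, pow_zero, pow_one, add_sub_cancel_right]
  | succ k ih =>
    have hconj : cubic a (b ^ 3 - b + a ^ 3) z + b = (z + b) ^ 3 := by
      simp only [cubic]
      linear_combination (a ^ 3 - a ^ 2 * z - z ^ 2 * b - z * b ^ 2) * h3
    rw [iterate_succ_apply, ih, hconj, ← pow_mul, ← pow_succ']

theorem exists_mem_swapSet_iff_modEq {m' n' : ℕ} (h0 : 1 ≤ m' + n') :
    ∃ w, ∀ m n, w ∈ swapSet (GaloisField 3 (m' + n')) m n ↔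
      m ≡ m' [MOD m' + n'] ∧ n ≡ n' [MOD m' + n'] := by
  let L := GaloisField 3 (m' + n')
  have h3 : (3 : L) = 0 := mod_cast CharP.cast_eq_zero L 3
  obtain ⟨x, hx⟩ := exists_pow_card_pow_eq_iff_modEq_finrank (ZMod 3) L
  rw [GaloisField.finrank 3 (Nat.ne_of_gt h0), ZMod.card] at hx
  have hperiod : x ^ 3 ^ (m' + n') = x := by
    simpa only [pow_zero, pow_one] using (hx (m' + n') 0).2 Nat.modulus_modEq_zero
  let y := x ^ 3 ^ m'
  let a := y - x
  let b := -(x + y)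
  have hab : a + b = x := by linear_combination -x * h3
  have hnab : -a + b = y := by linear_combination -y * h3
  refine ⟨(a, b ^ 3 - b + a ^ 3), fun m n => and_congr ?_ ?_⟩
  · rw [cubic_iterate_of_charP_three, sub_eq_iff_eq_add, hab, hnab]
    exact hx m m'
  · rw [cubic_iterate_of_charP_three, sub_eq_iff_eq_add, hab, hnab, ← pow_mul, ← pow_add]
    have h := hx (m' + n) (m' + n')
    rw [hperiod] at h
    exact h.trans Nat.ModEq.rfl.add_iff_left

end CharThree

theorem stmt3_general {K : Type*} [Field K] [IsAlgClosed K] [CharZero K] (m' n' m n : ℕ)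
    (h0 : 1 ≤ m' + n') :
    (swapSet K m' n' ⊆ swapSet K m n ↔ m ≡ m' [MOD m' + n'] ∧ n ≡ n' [MOD m' + n']) ∧
    (swapSet K m' n' ⊆ swapSet K m n → (m' + n') ∣ (m + n)) := by
  have hiff : swapSet K m' n' ⊆ swapSet K m n ↔ m ≡ m' [MOD m' + n'] ∧ n ≡ n' [MOD m' + n'] := by
    refine ⟨fun h => ?_, fun h => swapSet_subset_of_modEq h.1 h.2⟩
    obtain ⟨w, hw⟩ := exists_mem_swapSet_iff_modEq h0
    exact (hw m n).1 (swapSet_subset_of_charP_three h0 h ((hw m' n').2 ⟨rfl, rfl⟩))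
  refine ⟨hiff, fun h => ?_⟩
  obtain ⟨hm, hn⟩ := hiff.1 h
  exact Nat.modEq_zero_iff_dvd.1 ((hm.add hn).trans (Nat.modEq_zero_iff_dvd.2 dvd_rfl))

theorem stmt3 (m' n' m n : ℕ) (h0 : 1 ≤ m' + n') (hm : m' ≤ m) (hn : n' ≤ n) :
    (Bset m' n' ⊆ Bset m n ↔ m ≡ m' [MOD m' + n'] ∧ n ≡ n' [MOD m' + n']) ∧
    (Bset m' n' ⊆ Bset m n → (m' + n') ∣ (m + n)) :=
  stmt3_general m' n' m n h0
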